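/- Let N ≥ n ≥ 1. Let {H_j}_{j=1}^q be hyperplanes in ℙ^n in general position and {H'_j}_{j=1}^q hyperplanes in ℙ^N in general position. Let f: ℂ^m → ℙ^n and g: ℂ^m → ℙ^N be meromorphic maps with f(ℂ^m) ⊄ H_j, g(ℂ^m) ⊄ H'_j, and f*(H_j) = g*(H'_j) for 1 ≤ j ≤ q. If g is linearly non-degenerate and q ≥ N+2n+2, then N = n, and there exist a projective linear transformation L of ℙ^n and n+2 distinct indices k₁,…,k_{n+2} ∈ {1,…,q} such that f = L(g) and L(H'_{k_i}) = H_{k_i} for 1 ≤ i ≤ n+2. -/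

import Mathlib

/-!
Write `u j` for the nowhere-zero ratio of `(f, H j)` and `(g, H' j)`. For any `N + n + 2` of the
indices the vector `(f, -g)` is in the kernel of the square matrix with rows `(H j, u j • H' j)`, so
its determinant vanishes identically. Laplace expansion (`det_eq_sum_laplaceBlock`) turns this into a
linear relation between products of `N + 1` of the units `u j`, in which, by general position, the
coefficient of the product over any prescribed `N + 1` indices is nonzero.

Borel's theorem (`exists_exponent_eq`) says that in such a relation every product that occurs is
proportional to another one. It is applied on a complex line through the origin and a point which
detects proportionality of the `u j` (`exists_detecting_point`), where `u j` is a constant times the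
exponential of a normalized entire function `a j`. Hence among any `N + n + 2` of the `a j`, the sum
over any `N + 1` of them coincides with the sum over another `N + 1` of them. Ordering the `a j`
through a separating linear functional, and comparing the `N + 1` smallest with the `n + 1` largest
ones, one sees that all those in between, at least `n + 2` in number, agree
(`exists_equal_vectors`). The corresponding `u j` are pairwise proportional, and linear algebra gives
the projective transformation: `n + 1` of these hyperplanes define `M`, and the remaining one rules
out `n < N`.

Borel's theorem is proved without Nevanlinna theory for maps. Suppose that
`∑ κ i * exp (h i) = 1` with linearly independent exponentials. Instead of Wronskians, the relation
is evaluated at finitely many small shifts of `z`, and Cramer's rule gives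
`Re (h i) ≤ const - log ‖D‖`, where the determinant `D` is bounded above, and bounded below at the
origin by a power of the size of the shifts. Jensen's formula controls the mean of `log ‖D‖`, so the
Poisson formula bounds `Re (h i)` by the logarithm of the maximum of the `h i` on a slightly larger
disc (`exists_re_bound`). With Borel's growth lemma and the Borel–Carathéodory theorem this forces
logarithmic growth, hence `h i = 0` (`exponents_eq_zero`).
-/

/-- A family of hyperplanes, given by their coefficient vectors, is in general position
if the coefficient vectors of any at most `d+1` of them are linearly independent. -/
def InGenPos {q d : ℕ} (H : Fin q → (Fin (d + 1) → ℂ)) : Prop :=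
  ∀ S : Finset (Fin q), S.card ≤ d + 1 →
    LinearIndependent ℂ (fun i : {x // x ∈ S} => H i.1)

/-! ### Jensen and Poisson estimates on a disc -/

open Real Metric Filter Topology in
/-- Jensen's inequality: by Jensen's formula the zeros of `D` only increase the circle average of
`log ‖D‖`. -/
theorem avg_log_norm_ge {D : ℂ → ℂ} (hD : Differentiable ℂ D) {R : ℝ} (hR : 0 < R)
    (hD0 : D 0 ≠ 0) : Real.log ‖D 0‖ ≤ circleAverage (fun z => Real.log ‖D z‖) 0 R := by
  have han : AnalyticOnNhd ℂ D (closedBall 0 |R|) := fun z _ => hD.analyticAt z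
  rw [AnalyticOnNhd.circleAverage_log_norm hR.ne' han hD0]
  have : 0 ≤ ∑ᶠ u, MeromorphicOn.divisor D (closedBall 0 |R|) u * Real.log (R * ‖0 - u‖⁻¹) := by
    apply finsum_nonneg
    intro u
    by_cases hu : u ∈ closedBall (0:ℂ) |R|
    · refine mul_nonneg (mod_cast MeromorphicOn.AnalyticOnNhd.divisor_nonneg han _) ?_
      by_cases hu0 : u = 0
      · simp [hu0]
      apply Real.log_nonneg
      have h1 : 0 < ‖u‖ := norm_pos_iff.2 hu0
      have h2 : ‖u‖ ≤ R := by simpa [abs_of_pos hR] using hu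
      rw [zero_sub, norm_neg, ← div_eq_mul_inv, one_le_div h1]
      exact h2
    · simp [hu]
  linarith

open Real Metric Filter Topology in
/-- Harnack-type estimate. If off the zeros of `D` the function `(h z).re` is at most the
nonnegative quantity `log K - log ‖D z‖ + L`, then integrating this bound against the Poisson kernel
and using Jensen's inequality for `D` bounds `(h w).re` in the interior of the disc. The point is
that no lower bound for `‖D‖` is needed except at the origin. -/
theorem re_le_of_log_bound {h D : ℂ → ℂ} (hh : Differentiable ℂ h) (hD : Differentiable ℂ D)
    {R K L : ℝ} (hR : 0 < R) (hK : 1 ≤ K) (hL : 0 ≤ L) (hD0 : D 0 ≠ 0)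
    (hDK : ∀ z, ‖z‖ ≤ R → ‖D z‖ ≤ K)
    (hb : ∀ z, ‖z‖ ≤ R → D z ≠ 0 → (h z).re ≤ Real.log K - Real.log ‖D z‖ + L)
    {w : ℂ} (hw : ‖w‖ < R) :
    (h w).re ≤ (R + ‖w‖) / (R - ‖w‖) * (Real.log K + L - Real.log ‖D 0‖) := by
  have hwb : w ∈ ball (0:ℂ) R := by simpa using hw
  set Q := (R + ‖w‖) / (R - ‖w‖) with hQ
  have hQ0 : 0 ≤ Q := div_nonneg (by positivity) (by linarith)
  have habs : |R| = R := abs_of_pos hR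
  set P : ℂ → ℝ := fun z => (herglotzRieszKernel 0 w z).re with hP
  have hPcont : ContinuousOn P (sphere 0 R) := by
    have := continuousOn_herglotzRieszKernel_sphere hwb
    rw [habs] at this
    exact Complex.continuous_re.comp_continuousOn this
  have hPle : ∀ z ∈ sphere (0:ℂ) R, P z ≤ Q := by
    intro z hz
    simpa [hP, herglotzRieszKernel_def] using re_herglotzRieszKernel_le hz hwb
  have hPge : ∀ z ∈ sphere (0:ℂ) R, 0 ≤ P z := by
    intro z hz
    have := le_re_herglotzRieszKernel hz hwb
    refine le_trans (div_nonneg ?_ ?_) (by simpa [hP, herglotzRieszKernel_def] using this)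
    · linarith
    · positivity
  have hcont : Continuous fun z => (h z).re := Complex.continuous_re.comp hh.continuous
  -- Poisson formula for the real part
  have hpois : (h w).re = circleAverage (fun z => P z * (h z).re) 0 R := by
    have h1 := DiffContOnCl.circleAverage_re_herglotzRieszKernel_smul
      (f := h) (c := 0) (R := R) hh.diffContOnCl hwb
    have hci : CircleIntegrable ((Complex.re ∘ herglotzRieszKernel 0 w) • h) 0 R := by
      apply ContinuousOn.circleIntegrable hR.le
      exact ContinuousOn.smul hPcont hh.continuous.continuousOn
    have h2 := ContinuousLinearMap.circleAverage_comp_comm Complex.reCLM hci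
    rw [h1] at h2
    rw [← Complex.reCLM_apply, ← h2]
    congr 1
    ext z
    simp [hP]
  set V : ℂ → ℝ := fun z => Real.log K - Real.log ‖D z‖ + L with hV
  have hVnn : ∀ z, ‖z‖ ≤ R → 0 ≤ V z := by
    intro z hz
    have : Real.log ‖D z‖ ≤ Real.log K := by
      by_cases h0 : D z = 0
      · simp [h0, Real.log_nonneg hK]
      · exact Real.log_le_log (norm_pos_iff.2 h0) (hDK z hz)
    simp only [hV]; linarith
  -- at a zero of `D` the junk value `log 0 = 0` makes `V` too small, so `V` is enlarged there to a
  -- majorant `V'` of the positive part of `Re h` that is valid on the whole circle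
  set V' : ℂ → ℝ := fun z => max (max (h z).re 0) (V z) with hV'
  have hlogint : CircleIntegrable (fun z => Real.log ‖D z‖) 0 R :=
    MeromorphicOn.circleIntegrable_log_norm fun z _ => (hD.analyticAt z).meromorphicAt
  have hVint : CircleIntegrable V 0 R :=
    ((circleIntegrable_const _ _ _).sub hlogint).add (circleIntegrable_const _ _ _)
  -- `V` and `V'` differ only at the zeros of `D`, a discrete set
  have hVV' : V =ᶠ[codiscreteWithin (sphere (0:ℂ) |R|)] V' := by
    have hcod : ∀ᶠ z in codiscreteWithin (sphere (0:ℂ) |R|), D z ≠ 0 := by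
      have han : AnalyticOnNhd ℂ D Set.univ := fun z _ => hD.analyticAt z
      have h1 := han.preimage_zero_mem_codiscrete (x := 0) hD0
      exact codiscreteWithin_mono (Set.subset_univ _) h1
    filter_upwards [hcod, self_mem_codiscreteWithin _] with z hz hzs
    have hz' : ‖z‖ ≤ R := by
      have : ‖z‖ = |R| := by simpa using hzs
      rw [this, habs]
    simp only [hV']
    rw [eq_comm, max_eq_right]
    exact max_le (hb z hz' hz) (hVnn z hz')
  have hV'int : CircleIntegrable V' 0 R := hVint.congr_codiscreteWithin hVV'
  rw [hpois]
  calc circleAverage (fun z => P z * (h z).re) 0 R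
      ≤ circleAverage (fun z => Q * V' z) 0 R := by
        apply circleAverage_mono
        · apply ContinuousOn.circleIntegrable hR.le
          exact hPcont.mul hcont.continuousOn
        · exact hV'int.const_fun_smul (a := Q)
        · intro z hz
          rw [habs] at hz
          have h1 : (h z).re ≤ max (h z).re 0 := le_max_left _ _
          have h2 : 0 ≤ max (h z).re 0 := le_max_right _ _
          calc P z * (h z).re ≤ P z * max (h z).re 0 :=
                mul_le_mul_of_nonneg_left h1 (hPge z hz)
            _ ≤ Q * max (h z).re 0 := mul_le_mul_of_nonneg_right (hPle z hz) h2
            _ ≤ Q * V' z := mul_le_mul_of_nonneg_left (le_max_left _ _) hQ0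
    _ = Q * circleAverage V' 0 R := by
        simpa using circleAverage_fun_smul (a := Q) (f := V') (c := 0) (R := R)
    _ = Q * circleAverage V 0 R := by rw [circleAverage_congr_codiscreteWithin hVV' hR.ne']
    _ = Q * (Real.log K - circleAverage (fun z => Real.log ‖D z‖) 0 R + L) := by
        have h1 : CircleIntegrable (fun z => Real.log K - Real.log ‖D z‖) 0 R :=
          (circleIntegrable_const _ _ _).sub hlogint
        simp only [hV]
        rw [circleAverage_fun_add h1 (circleIntegrable_const _ _ _),
          circleAverage_fun_sub (circleIntegrable_const _ _ _) hlogint, circleAverage_const,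
          circleAverage_const]
    _ ≤ _ := by
        apply mul_le_mul_of_nonneg_left _ hQ0
        linarith [avg_log_norm_ge hD hR hD0]

/-! ### Bounding exponents by shifting and Cramer's rule -/

/-- Linearly independent functions have a nonvanishing evaluation determinant. -/
theorem exists_eval_det_ne_zero {ι : Type*} [Fintype ι] [DecidableEq ι] {f : ι → ℂ → ℂ}
    (hf : LinearIndependent ℂ f) :
    ∃ b : ι → ℂ, (Matrix.of fun k i => f i (b k)).det ≠ 0 := by
  set v : ℂ → (ι → ℂ) := fun z i => f i z with hv
  have hspan : Submodule.span ℂ (Set.range v) = ⊤ := by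
    by_contra hne
    obtain ⟨φ, hφ0, hφ⟩ := Submodule.exists_dual_map_eq_bot_of_lt_top (lt_top_iff_ne_top.2 hne)
      inferInstance
    apply hφ0
    have hφv : ∀ z, φ (v z) = 0 := by
      intro z
      have : φ (v z) ∈ (Submodule.span ℂ (Set.range v)).map φ :=
        Submodule.mem_map_of_mem (Submodule.subset_span ⟨z, rfl⟩)
      rw [hφ] at this
      simpa using this
    have hzero : ∑ i, φ (Pi.single i 1) • f i = 0 := by
      ext z
      have h1 := hφv z
      rw [LinearMap.pi_apply_eq_sum_univ φ (v z)] at h1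
      simp only [Finset.sum_apply, Pi.smul_apply, smul_eq_mul, Pi.zero_apply]
      rw [← h1]
      refine Finset.sum_congr rfl fun i _ => ?_
      rw [smul_eq_mul, mul_comm]
      congr 2
      ext j
      simp [Pi.single_apply, eq_comm]
    have hc := Fintype.linearIndependent_iff.1 hf _ hzero
    refine LinearMap.pi_ext' fun i => LinearMap.ext_ring ?_
    simpa using hc i
  obtain ⟨κ, a, -, ha, hli⟩ := exists_linearIndependent' ℂ v
  rw [hspan] at ha
  let B := Module.Basis.mk hli ha.ge
  let e : ι ≃ κ := (Pi.basisFun ℂ ι).indexEquiv B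
  refine ⟨fun k => a (e k), ?_⟩
  have hrows : LinearIndependent ℂ (fun k => v (a (e k))) := hli.comp _ e.injective
  have : LinearIndependent ℂ (Matrix.of fun k i => f i (a (e k))).row := hrows
  rw [Matrix.linearIndependent_rows_iff_isUnit] at this
  exact ((Matrix.isUnit_iff_isUnit_det _).1 this).ne_zero

open Filter Topology in
/-- Near the origin an entire function that is not identically zero is bounded below by a multiple
of a power of the distance to the origin. -/
theorem exists_pow_lower_bound {E : ℂ → ℂ} (hE : Differentiable ℂ E) (hE1 : E 1 ≠ 0) :
    ∃ c > 0, ∃ p : ℕ, ∃ ε₀ > 0, ∀ ε : ℝ, 0 < ε → ε ≤ ε₀ → c * ε ^ p ≤ ‖E ε‖ := by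
  have hnz : ¬∀ᶠ z in 𝓝 (0:ℂ), E z = 0 := by
    intro h
    have han : AnalyticOnNhd ℂ E Set.univ := fun z _ => hE.analyticAt z
    exact hE1 (congrFun (han.eq_of_eventuallyEq (g := fun _ => 0)
      (fun z _ => analyticAt_const) h) 1)
  obtain ⟨p, g, hg, hg0, hEg⟩ := (hE.analyticAt 0).exists_eventuallyEq_pow_smul_nonzero_iff.2 hnz
  have hgc : ∀ᶠ z in 𝓝 (0:ℂ), ‖g 0‖ / 2 < ‖g z‖ :=
    hg.continuousAt.norm.eventually_const_lt (by linarith [norm_pos_iff.2 hg0])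
  obtain ⟨ε₀, hε₀, hball⟩ := Metric.eventually_nhds_iff.1 (hEg.and hgc)
  refine ⟨‖g 0‖ / 2, by positivity, p, ε₀ / 2, by positivity, fun ε h1 h2 => ?_⟩
  obtain ⟨h3, h4⟩ := @hball (ε:ℂ) (by simp [abs_of_pos h1]; linarith)
  rw [h3]
  simp only [sub_zero, norm_smul, norm_pow, Complex.norm_real, Real.norm_eq_abs, abs_of_pos h1]
  rw [mul_comm]
  gcongr

open Metric in
/-- By the Schwarz lemma, a shift of size `δ / (2 * A)` changes `h` by at most `1` when `‖h‖ ≤ A`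
on a disc that is larger by `δ`. -/
theorem norm_sub_le_one_of_small {h : ℂ → ℂ} (hh : Differentiable ℂ h) {R δ A : ℝ}
    (hδ : 0 < δ) (hA : 1 ≤ A) (hb : ∀ z, ‖z‖ ≤ R + δ → ‖h z‖ ≤ A) {z w : ℂ} (hz : ‖z‖ ≤ R)
    (hw : ‖w‖ ≤ δ / (2 * A)) : ‖h (z + w) - h z‖ ≤ 1 := by
  have hwδ : ‖w‖ < δ := by
    refine hw.trans_lt ?_
    rw [div_lt_iff₀ (by linarith)]
    nlinarith
  have hmaps : Set.MapsTo h (ball z δ) (closedBall (h z) (2 * A)) := by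
    intro x hx
    rw [mem_closedBall, dist_eq_norm]
    have hx' : ‖x - z‖ < δ := by simpa [dist_eq_norm] using hx
    have h1 : ‖x‖ ≤ R + δ := by
      have := norm_add_le (x - z) z
      rw [sub_add_cancel] at this
      linarith
    have h2 := hb x h1
    have h3 := hb z (by linarith)
    linarith [norm_sub_le (h x) (h z)]
  have h1 := Complex.dist_le_div_mul_dist_of_mapsTo_ball hh.differentiableOn hmaps
    (z := z + w) (by simpa using hwδ)
  rw [dist_eq_norm, dist_eq_norm, add_sub_cancel_left] at h1
  refine h1.trans ?_
  calc 2 * A / δ * ‖w‖ ≤ 2 * A / δ * (δ / (2 * A)) := by gcongr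
    _ = 1 := by field_simp

theorem norm_det_le_of_entries {ι : Type*} [Fintype ι] [DecidableEq ι] {x : ℝ}
    (M : Matrix ι ι ℂ) (hM : ∀ i j, ‖M i j‖ ≤ x) :
    ‖M.det‖ ≤ (Fintype.card ι).factorial * x ^ Fintype.card ι := by
  have := Matrix.det_le (A := M) (abv := NormedField.toAbsoluteValue ℂ) (x := x) hM
  rw [nsmul_eq_mul] at this
  exact this

/-- One-step estimate in the proof of Borel's theorem. If the exponentials of the `h i` are linearly
independent and satisfy `∑ κ i * exp (h i) = 1`, then a bound `A` for the `h i` on the disc of radius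
`R + δ` implies a bound of order `log A - log δ` for their real parts inside the disc of radius `R`.

Comparing the relation at the shifted points `z + ε b k` gives a linear system for the terms
`κ i * exp (h i z)`, whose matrix `Ψ z` has entries `exp (h i (z + ε b k) - h i z)`, bounded
by `exp 1` when `ε` is of size `δ / A`. Cramer's rule bounds `‖exp (h i z)‖` by a constant over
`‖det (Ψ z)‖`, and `det (Ψ 0)` is at least of the size of a power of `ε`. -/
theorem exists_re_bound {ι : Type*} [Fintype ι] [DecidableEq ι] {h : ι → ℂ → ℂ}
    (hh : ∀ i, Differentiable ℂ (h i)) (h0 : ∀ i, h i 0 = 0) {κ : ι → ℂ} (hκ : ∀ i, κ i ≠ 0)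
    (hli : LinearIndependent ℂ (fun i z => Complex.exp (h i z)))
    (hsum : ∀ z, ∑ i, κ i * Complex.exp (h i z) = 1) :
    ∃ C > 0, ∀ R δ A : ℝ, 0 < R → 0 < δ → δ ≤ 1 → 1 ≤ A →
      (∀ i z, ‖z‖ ≤ R + δ → ‖h i z‖ ≤ A) → ∀ i w, ‖w‖ < R →
        (h i w).re ≤ (R + ‖w‖) / (R - ‖w‖) * (C * (1 + Real.log A - Real.log δ)) := by
  obtain ⟨b, hb⟩ := exists_eval_det_ne_zero hli
  set E : ℂ → ℂ := fun ε => (Matrix.of fun k i => Complex.exp (h i (ε * b k))).det with hE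
  have hEd : Differentiable ℂ E := by
    simp only [hE, Matrix.det_apply, Matrix.of_apply]
    fun_prop
  obtain ⟨c, hc, p, ε₀, hε₀, hlow⟩ := exists_pow_lower_bound hEd (by simpa [hE] using hb)
  obtain ⟨β, hβ1, hβ⟩ : ∃ β : ℝ, 1 ≤ β ∧ ∀ k, ‖b k‖ ≤ β := by
    refine ⟨1 + ∑ k, ‖b k‖, by simpa using Finset.sum_nonneg fun i _ => norm_nonneg _, fun k => ?_⟩
    have := Finset.single_le_sum (f := fun k => ‖b k‖) (fun i _ => norm_nonneg _)
      (Finset.mem_univ k)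
    linarith
  set ε₁ := min ε₀ (1 / (2 * β)) with hε₁
  have hε₁0 : 0 < ε₁ := lt_min hε₀ (by positivity)
  set K : ℝ := (Fintype.card ι).factorial * Real.exp 1 ^ Fintype.card ι with hKdef
  have hK : 1 ≤ K := by
    rw [hKdef]
    refine one_le_mul_of_one_le_of_one_le ?_ (one_le_pow₀ (Real.one_le_exp (by norm_num)))
    exact_mod_cast Nat.one_le_iff_ne_zero.2 (Nat.factorial_ne_zero _)
  set L : ℝ := ∑ i, |Real.log ‖κ i‖| with hL
  have hL0 : 0 ≤ L := Finset.sum_nonneg fun i _ => abs_nonneg _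
  refine ⟨Real.log K + L + |Real.log c| + p * |Real.log ε₁| + p + 1, ?_, ?_⟩
  · have := Real.log_nonneg hK
    positivity
  intro R δ A hR hδ hδ1 hA hbd i w hw
  have hA0 : 0 < A := by linarith
  -- shifts of size `ε` change every `h i` by at most `1` on the disc of radius `R`
  set ε : ℝ := ε₁ * δ / A with hε
  have hεpos : 0 < ε := by positivity
  have hεle : ε ≤ ε₀ := by
    rw [hε, div_le_iff₀ hA0]
    have : ε₁ ≤ ε₀ := min_le_left _ _
    calc ε₁ * δ ≤ ε₀ * 1 := by gcongr
      _ ≤ ε₀ * A := by gcongr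
  have hshift : ∀ k, ‖(ε:ℂ) * b k‖ ≤ δ / (2 * A) := by
    intro k
    rw [norm_mul, Complex.norm_real, Real.norm_eq_abs, abs_of_pos hεpos]
    have h1 : ε₁ ≤ 1 / (2 * β) := min_le_right _ _
    calc ε * ‖b k‖ ≤ (1 / (2 * β) * δ / A) * β := by
          rw [hε]; gcongr; exact hβ k
      _ = δ / (2 * A) := by field_simp
  set Ψ : ℂ → Matrix ι ι ℂ := fun z =>
    Matrix.of fun k i => Complex.exp (h i (z + ε * b k) - h i z) with hΨ
  set D : ℂ → ℂ := fun z => (Ψ z).det with hD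
  have hDd : Differentiable ℂ D := by
    simp only [hD, hΨ, Matrix.det_apply, Matrix.of_apply]
    fun_prop
  have hent : ∀ z, ‖z‖ ≤ R → ∀ k j, ‖Ψ z k j‖ ≤ Real.exp 1 := by
    intro z hz k j
    simp only [hΨ, Matrix.of_apply, Complex.norm_exp]
    apply Real.exp_le_exp.2
    exact (Complex.re_le_norm _).trans
      (norm_sub_le_one_of_small (hh j) hδ hA (hbd j) hz (hshift k))
  have hDK : ∀ z, ‖z‖ ≤ R → ‖D z‖ ≤ K := fun z hz => norm_det_le_of_entries _ (hent z hz)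
  have hD0E : D 0 = E ε := by
    simp [hD, hΨ, hE, h0]
  have hD0low : c * ε ^ p ≤ ‖D 0‖ := by
    rw [hD0E]
    exact hlow ε hεpos hεle
  have hD0pos : 0 < ‖D 0‖ := lt_of_lt_of_le (by positivity) hD0low
  -- Cramer's rule for the system `Ψ z *ᵥ f z = 1`, where `f i z = κ i * exp (h i z)`
  have hcr : ∀ z, D z * (κ i * Complex.exp (h i z)) = ((Ψ z).updateCol i 1).det := by
    intro z
    have h1 : (Ψ z).mulVec (fun j => κ j * Complex.exp (h j z)) = 1 := by
      ext k
      simp only [Matrix.mulVec, dotProduct, hΨ, Matrix.of_apply, Pi.one_apply]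
      rw [← hsum (z + ε * b k)]
      refine Finset.sum_congr rfl fun j _ => ?_
      rw [mul_left_comm, ← Complex.exp_add, sub_add_cancel]
    have h2 := congrFun (Matrix.cramer_eq_adjugate_mulVec (Ψ z) 1) i
    rw [← h1, Matrix.mulVec_mulVec, Matrix.adjugate_mul, Matrix.smul_mulVec, Matrix.one_mulVec,
      Matrix.cramer_apply] at h2
    rw [h1] at h2
    rw [h2]
    simp [hD]
  have hlog : ∀ z, ‖z‖ ≤ R → D z ≠ 0 →
      (h i z).re ≤ Real.log K - Real.log ‖D z‖ + L := by
    intro z hz hDz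
    have h1 : ‖((Ψ z).updateCol i 1).det‖ ≤ K := by
      apply norm_det_le_of_entries
      intro k j
      by_cases hj : j = i
      · subst hj
        simp
      · rw [Matrix.updateCol_ne hj]
        exact hent z hz k j
    rw [← hcr z, norm_mul, norm_mul, Complex.norm_exp] at h1
    have hDp := norm_pos_iff.2 hDz
    have hκp := norm_pos_iff.2 (hκ i)
    have h2 := Real.log_le_log (by positivity) h1
    rw [Real.log_mul hDp.ne' (by positivity), Real.log_mul hκp.ne' (by positivity),
      Real.log_exp] at h2
    have h3 : |Real.log ‖κ i‖| ≤ L :=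
      Finset.single_le_sum (f := fun i => |Real.log ‖κ i‖|) (fun i _ => abs_nonneg _)
        (Finset.mem_univ i)
    linarith [neg_abs_le (Real.log ‖κ i‖)]
  have hmain := re_le_of_log_bound (hh i) hDd hR hK hL0 (norm_pos_iff.1 hD0pos) hDK hlog hw
  refine hmain.trans ?_
  have hQ0 : 0 ≤ (R + ‖w‖) / (R - ‖w‖) := div_nonneg (by positivity) (by linarith)
  apply mul_le_mul_of_nonneg_left _ hQ0
  have h4 := Real.log_le_log (by positivity) hD0low
  rw [Real.log_mul hc.ne' (by positivity), Real.log_pow, hε, Real.log_div (by positivity) hA0.ne',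
    Real.log_mul hε₁0.ne' hδ.ne'] at h4
  have h5 : 0 ≤ Real.log A := Real.log_nonneg hA
  have h6 : Real.log δ ≤ 0 := Real.log_nonpos hδ.le hδ1
  have h7 : 0 ≤ Real.log K := Real.log_nonneg hK
  have h8 := neg_abs_le (Real.log c)
  have h9 : (p:ℝ) * (-Real.log ε₁) ≤ p * |Real.log ε₁| := by
    gcongr
    exact neg_le_abs _
  have hp : (0:ℝ) ≤ p := by positivity
  set S := Real.log A - Real.log δ with hS
  have hS0 : 0 ≤ S := by linarith
  set X := Real.log K + L + |Real.log c| + p * |Real.log ε₁| + 1 with hX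
  have hX0 : 0 ≤ X := by positivity
  have : Real.log K + L - Real.log ‖D 0‖ ≤ X + p * S := by
    rw [hS, hX]
    nlinarith
  refine this.trans ?_
  rw [add_sub_assoc, ← hS]
  have : Real.log K + L + |Real.log c| + p * |Real.log ε₁| + p + 1 = X + p := by rw [hX]; ring
  rw [this]
  nlinarith [mul_nonneg hX0 hS0]

/-! ### Growth of the exponents -/

/-- Borel's growth lemma: a monotone function `S ≥ 1` satisfies `S (r + 1 / S r) ≤ 2 * S r` for
arbitrarily large `r`. -/
theorem exists_growth_radius {S : ℝ → ℝ} (hmono : MonotoneOn S (Set.Ici 0)) (h1 : ∀ r, 1 ≤ S r)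
    {r₀ : ℝ} (hr₀ : 0 ≤ r₀) : ∃ r ≥ r₀, S (r + 1 / S r) ≤ 2 * S r := by
  by_contra! hcon
  -- otherwise `S` doubles at each step of the sequence `ρ`, whose increments `1 / S (ρ k)` are then
  -- at most `2⁻ᵏ`, so `S` is unbounded on a bounded interval
  let ρ : ℕ → ℝ := fun k => Nat.rec r₀ (fun _ r => r + 1 / S r) k
  have hρs : ∀ k, ρ (k + 1) = ρ k + 1 / S (ρ k) := fun k => rfl
  have hpos : ∀ r, 0 < S r := fun r => by linarith [h1 r]
  have hρ0 : ∀ k, r₀ ≤ ρ k := by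
    intro k
    induction k with
    | zero => exact le_refl _
    | succ k ih =>
      rw [hρs]
      have := one_div_pos.2 (hpos (ρ k))
      linarith
  have hS : ∀ k, (2:ℝ) ^ k ≤ S (ρ k) := by
    intro k
    induction k with
    | zero => simpa using h1 _
    | succ k ih =>
      have := hcon (ρ k) (hρ0 k)
      rw [hρs, pow_succ]
      linarith
  have hρ2 : ∀ k, ρ k ≤ r₀ + 2 - 2 * (1 / 2) ^ k := by
    intro k
    induction k with
    | zero => simp [ρ]
    | succ k ih =>
      have : 1 / S (ρ k) ≤ (1 / 2) ^ k := by
        rw [one_div_pow]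
        exact one_div_le_one_div_of_le (by positivity) (hS k)
      rw [hρs, pow_succ]
      linarith
  obtain ⟨k, hk⟩ := pow_unbounded_of_one_lt (S (r₀ + 2)) (one_lt_two)
  have h2 : S (ρ k) ≤ S (r₀ + 2) := by
    apply hmono
    · exact hr₀.trans (hρ0 k)
    · exact Set.mem_Ici.2 (by linarith)
    · have : (0:ℝ) ≤ 2 * (1 / 2) ^ k := by positivity
      linarith [hρ2 k]
  linarith [hS k]

open Metric in
/-- The one-step estimate with norms in place of real parts, by the Borel–Carathéodory theorem. The
factor `‖w‖ / (R - ‖w‖) ^ 2 * R` decays as `R` tends to infinity. -/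
theorem exists_norm_bound {ι : Type*} [Fintype ι] [DecidableEq ι] {h : ι → ℂ → ℂ}
    (hh : ∀ i, Differentiable ℂ (h i)) (h0 : ∀ i, h i 0 = 0) {κ : ι → ℂ} (hκ : ∀ i, κ i ≠ 0)
    (hli : LinearIndependent ℂ (fun i z => Complex.exp (h i z)))
    (hsum : ∀ z, ∑ i, κ i * Complex.exp (h i z) = 1) :
    ∃ C > 0, ∀ R δ A : ℝ, 0 < R → 0 < δ → δ ≤ 1 → 1 ≤ A →
      (∀ i z, ‖z‖ ≤ R + δ → ‖h i z‖ ≤ A) → ∀ w, ‖w‖ < R →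
        ∑ i, ‖h i w‖ ≤ C * (R * ‖w‖ / (R - ‖w‖) ^ 2) * (1 + Real.log A - Real.log δ) := by
  obtain ⟨C, hC, hre⟩ := exists_re_bound hh h0 hκ hli hsum
  refine ⟨(Fintype.card ι + 1) * (16 * C), by positivity, ?_⟩
  intro R δ A hR hδ hδ1 hA hbd w hw
  have hY : 0 < 1 + Real.log A - Real.log δ := by
    linarith [Real.log_nonneg hA, Real.log_nonpos hδ.le hδ1]
  set Y := 1 + Real.log A - Real.log δ with hYdef
  set g := (R - ‖w‖) / 2 with hg
  have hg0 : 0 < g := by rw [hg]; linarith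
  have hwn := norm_nonneg w
  have hone : ∀ i, ‖h i w‖ ≤ 16 * C * (R * ‖w‖ / (R - ‖w‖) ^ 2) * Y := by
    intro i
    set M := 2 * R / g * (C * Y) with hM
    have hM0 : 0 < M := by positivity
    have hmaps : Set.MapsTo (h i) (ball 0 (‖w‖ + g)) {z | z.re ≤ M} := by
      intro x hx
      have hx' : ‖x‖ < ‖w‖ + g := by simpa using hx
      have hxR : ‖x‖ < R := by rw [hg] at hx'; linarith
      refine (hre R δ A hR hδ hδ1 hA hbd i x hxR).trans ?_
      rw [hM]
      apply mul_le_mul_of_nonneg_right _ (by positivity)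
      apply div_le_div₀ (by positivity) (by linarith) hg0
      rw [hg] at hx' ⊢
      linarith
    have := Complex.borelCaratheodory_zero hM0 (hh i).differentiableOn hmaps
      (by positivity) (z := w) (by simpa using hg0) (h0 i)
    rw [add_sub_cancel_left] at this
    refine this.trans (le_of_eq ?_)
    have : R - ‖w‖ = 2 * g := by rw [hg]; ring
    rw [this, hM]
    field_simp
    ring
  calc ∑ i, ‖h i w‖ ≤ ∑ _i : ι, 16 * C * (R * ‖w‖ / (R - ‖w‖) ^ 2) * Y :=
        Finset.sum_le_sum fun i _ => hone i
    _ = Fintype.card ι * (16 * C * (R * ‖w‖ / (R - ‖w‖) ^ 2) * Y) := by simp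
    _ ≤ (Fintype.card ι + 1) * (16 * C * (R * ‖w‖ / (R - ‖w‖) ^ 2) * Y) := by
        gcongr
        linarith
    _ = _ := by ring

open Metric Filter Topology in
/-- Borel's theorem, irreducible case: if the exponentials of the normalized entire functions `h i`
are linearly independent and `1` is a combination of them with nonzero coefficients, then all `h i`
vanish. Let `A r` dominate the `h i` on the disc of radius `r`. The growth lemma for `log A` turns the
one-step estimate into `log A r = O(log r)` along a sequence of radii, and a second application of
the one-step estimate on these radii gives the vanishing, as in Liouville's theorem. -/
theorem exponents_eq_zero {ι : Type*} [Fintype ι] [DecidableEq ι] {h : ι → ℂ → ℂ}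
    (hh : ∀ i, Differentiable ℂ (h i)) (h0 : ∀ i, h i 0 = 0) {κ : ι → ℂ} (hκ : ∀ i, κ i ≠ 0)
    (hli : LinearIndependent ℂ (fun i z => Complex.exp (h i z)))
    (hsum : ∀ z, ∑ i, κ i * Complex.exp (h i z) = 1) (i : ι) (z : ℂ) : h i z = 0 := by
  obtain ⟨C, hC, hbound⟩ := exists_norm_bound hh h0 hκ hli hsum
  set N : ℂ → ℝ := fun z => ∑ i, ‖h i z‖ with hN
  have hN0 : ∀ z, 0 ≤ N z := fun z => Finset.sum_nonneg fun i _ => norm_nonneg _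
  have hNc : Continuous N := continuous_finsetSum _ fun i _ => (hh i).continuous.norm
  have hNi : ∀ i z, ‖h i z‖ ≤ N z := fun i z =>
    Finset.single_le_sum (f := fun i => ‖h i z‖) (fun i _ => norm_nonneg _) (Finset.mem_univ i)
  have hbdd : ∀ r, BddAbove (N '' closedBall 0 r) := fun r =>
    ((isCompact_closedBall (0:ℂ) r).image hNc).bddAbove
  set A : ℝ → ℝ := fun r => Real.exp 1 + sSup (N '' closedBall 0 r) with hA
  have hsup0 : ∀ r, 0 ≤ sSup (N '' closedBall 0 r) := fun r =>
    Real.sSup_nonneg (by rintro _ ⟨x, -, rfl⟩; exact hN0 x)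
  have hAe : ∀ r, Real.exp 1 ≤ A r := fun r => by simp only [hA]; linarith [hsup0 r]
  have he1 : (1:ℝ) ≤ Real.exp 1 := Real.one_le_exp (by norm_num)
  have hA1 : ∀ r, 1 ≤ A r := fun r => he1.trans (hAe r)
  have hNA : ∀ r z, ‖z‖ ≤ r → N z ≤ A r := by
    intro r z hz
    have := le_csSup (hbdd r) ⟨z, by simpa using hz, rfl⟩
    simp only [hA]
    linarith
  have hAmono : ∀ r s, 0 ≤ r → r ≤ s → A r ≤ A s := by
    intro r s hr hrs
    simp only [hA]
    have := csSup_le_csSup (hbdd s) (Set.Nonempty.image N ⟨0, by simpa using hr⟩)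
      (Set.image_mono (closedBall_subset_closedBall (x := (0:ℂ)) hrs))
    linarith
  set S : ℝ → ℝ := fun r => Real.log (A r) with hS
  have hS1 : ∀ r, 1 ≤ S r := fun r => by
    have := Real.log_le_log (Real.exp_pos 1) (hAe r)
    rwa [Real.log_exp] at this
  have hSmono : MonotoneOn S (Set.Ici 0) := fun r hr s _ hrs =>
    Real.log_le_log (by linarith [hA1 r]) (hAmono r s hr hrs)
  -- on a sequence of radii tending to infinity, `log A` grows at most like a multiple of `log r`
  set c := 2 * (Real.log (3 + 20 * C) + 3 * Real.log 6) with hc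
  have hfreq : ∀ r₀ : ℝ, 1 ≤ r₀ → ∃ r ≥ r₀, S r ≤ c + 4 * Real.log (r + 1) := by
    intro r₀ hr₀
    obtain ⟨r, hr, hgr⟩ := exists_growth_radius hSmono hS1 (by linarith : 0 ≤ r₀)
    refine ⟨r, hr, ?_⟩
    have hr1 : 1 ≤ r := hr₀.trans hr
    set s := S r with hs
    have hs1 : 1 ≤ s := hS1 r
    have hs0 : 0 < s := by linarith
    set δ := 1 / (2 * s) with hδ
    have hδ0 : 0 < δ := by positivity
    have hδ1 : δ ≤ 1 := by
      rw [hδ, div_le_one (by positivity)]; linarith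
    have hδδ : r + δ + δ = r + 1 / s := by rw [hδ]; field_simp; ring
    have hNr : ∀ w, ‖w‖ ≤ r → N w ≤ 20 * C * (r + 1) ^ 2 * s ^ 3 := by
      intro w hw
      have h1 := hbound (r + δ) δ (A (r + 1 / s)) (by positivity) hδ0 hδ1 (hA1 _)
        (fun i z hz => (hNi i z).trans (hNA _ _ (by rwa [← hδδ]))) w (by linarith)
      have h2 : 1 + Real.log (A (r + 1 / s)) - Real.log δ ≤ 5 * s := by
        have h3 : Real.log (A (r + 1 / s)) ≤ 2 * s := hgr
        have h4 : Real.log δ = - Real.log (2 * s) := by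
          rw [hδ, one_div, Real.log_inv]
        have h5 := Real.log_le_sub_one_of_pos (by positivity : 0 < 2 * s)
        linarith
      have h6 : (r + δ) * ‖w‖ / (r + δ - ‖w‖) ^ 2 ≤ (r + 1) * (r + 1) / δ ^ 2 := by
        apply div_le_div₀ (by positivity) _ (by positivity) _
        · gcongr
          linarith
        · gcongr
          linarith
      calc N w ≤ _ := h1
        _ ≤ C * ((r + δ) * ‖w‖ / (r + δ - ‖w‖) ^ 2) * (5 * s) := by
            gcongr
        _ ≤ C * ((r + 1) * (r + 1) / δ ^ 2) * (5 * s) := by gcongr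
        _ = 20 * C * (r + 1) ^ 2 * s ^ 3 := by rw [hδ]; field_simp; ring
    have hAr : A r ≤ (3 + 20 * C) * (r + 1) ^ 2 * s ^ 3 := by
      have h1 : sSup (N '' closedBall 0 r) ≤ 20 * C * (r + 1) ^ 2 * s ^ 3 := by
        apply csSup_le (Set.Nonempty.image N ⟨0, by simpa using (by linarith : 0 ≤ r)⟩)
        rintro _ ⟨w, hw, rfl⟩
        exact hNr w (by simpa using hw)
      have h2 : Real.exp 1 ≤ 3 := by linarith [Real.exp_one_lt_d9]
      have h3 : (1:ℝ) ≤ (r + 1) ^ 2 * s ^ 3 :=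
        one_le_mul_of_one_le_of_one_le (one_le_pow₀ (by linarith)) (one_le_pow₀ hs1)
      simp only [hA]
      nlinarith
    have h1 := Real.log_le_log (by linarith [hA1 r]) hAr
    rw [Real.log_mul (by positivity) (by positivity), Real.log_mul (by positivity) (by positivity),
      Real.log_pow, Real.log_pow] at h1
    have h2 : Real.log s ≤ s / 6 + Real.log 6 := by
      have h3 := Real.log_le_sub_one_of_pos (by positivity : 0 < s / 6)
      rw [Real.log_div hs0.ne' (by norm_num)] at h3
      linarith
    have h4 : s ≤ _ := h1
    push_cast at h4
    rw [hc]
    linarith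
  -- hence `N z` is bounded by quantities tending to `0`
  have hlim : Tendsto (fun r : ℝ => 4 * C * ‖z‖ * ((1 + c + 4 * Real.log 2) * r⁻¹ +
      4 * (Real.log r / r))) atTop (𝓝 0) := by
    have h1 : Tendsto (fun r : ℝ => r⁻¹) atTop (𝓝 0) := tendsto_inv_atTop_zero
    have h2 : Tendsto (fun r : ℝ => Real.log r / r) atTop (𝓝 0) :=
      Real.isLittleO_log_id_atTop.tendsto_div_nhds_zero
    simpa using ((h1.const_mul (1 + c + 4 * Real.log 2)).add (h2.const_mul 4)).const_mul
      (4 * C * ‖z‖)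
  have hle : N z ≤ 0 := by
    refine ge_of_tendsto_of_frequently hlim ?_
    rw [frequently_atTop]
    intro r₀
    obtain ⟨r, hr, hSr⟩ := hfreq (max r₀ (2 * (1 + ‖z‖) + 1))
      (le_max_of_le_right (by linarith [norm_nonneg z]))
    have hr1 : 2 * (1 + ‖z‖) + 1 ≤ r := (le_max_right _ _).trans hr
    refine ⟨r, (le_max_left _ _).trans hr, ?_⟩
    have hz := norm_nonneg z
    have hr0 : 0 < r := by linarith
    have h1 := hbound (r - 1) 1 (A r) (by linarith) one_pos le_rfl (hA1 r)
      (fun i w hw => (hNi i w).trans (hNA _ _ (by linarith))) z (by linarith)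
    rw [Real.log_one, sub_zero] at h1
    have h2 : (r - 1) * ‖z‖ / (r - 1 - ‖z‖) ^ 2 ≤ r * ‖z‖ / (r / 2) ^ 2 := by
      apply div_le_div₀ (by positivity) _ (by positivity) _
      · gcongr; linarith
      · gcongr; linarith
    have h3 : Real.log (r + 1) ≤ Real.log 2 + Real.log r := by
      rw [← Real.log_mul (by norm_num) hr0.ne']
      exact Real.log_le_log (by linarith) (by linarith)
    have h4 : 1 + Real.log (A r) ≤ 1 + c + 4 * Real.log 2 + 4 * Real.log r := by
      have : Real.log (A r) ≤ c + 4 * Real.log (r + 1) := hSr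
      linarith
    have h5 : 0 ≤ 1 + Real.log (A r) := by linarith [Real.log_nonneg (hA1 r)]
    calc N z ≤ _ := h1
      _ ≤ C * (r * ‖z‖ / (r / 2) ^ 2) * (1 + Real.log (A r)) := by gcongr
      _ ≤ C * (r * ‖z‖ / (r / 2) ^ 2) * (1 + c + 4 * Real.log 2 + 4 * Real.log r) := by gcongr
      _ = _ := by field_simp; ring
  exact norm_le_zero_iff.1 ((hNi i z).trans hle)

/-! ### Borel's theorem -/

/-- A nowhere-vanishing entire function is its value at the origin times the exponential of an
entire function vanishing at the origin. -/
theorem exists_entire_log {f : ℂ → ℂ} (hf : Differentiable ℂ f) (h0 : ∀ z, f z ≠ 0) :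
    ∃ a : ℂ → ℂ, Differentiable ℂ a ∧ a 0 = 0 ∧ ∀ z, f z = f 0 * Complex.exp (a z) := by
  have hd : Differentiable ℂ (fun z => deriv f z / f z) := hf.deriv.div hf h0
  obtain ⟨a, ha0, ha⟩ := (hd.isExactOn_univ).with_val_at 0 0
  have had : ∀ z, HasDerivAt a (deriv f z / f z) z := fun z => ha z trivial
  refine ⟨a, fun z => (had z).differentiableAt, ha0, fun z => ?_⟩
  have hconst : ∀ z, HasDerivAt (fun z => f z * Complex.exp (-a z)) 0 z := by
    intro z
    have h1 := (hf z).hasDerivAt.mul ((had z).neg.cexp)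
    refine h1.congr_deriv ?_
    field_simp [h0 z]
    simp
  have h2 := is_const_of_deriv_eq_zero (fun z => (hconst z).differentiableAt)
    (fun z => (hconst z).deriv) z 0
  simp only [ha0, neg_zero, Complex.exp_zero, mul_one] at h2
  rw [← h2, mul_assoc, ← Complex.exp_add]
  simp

/-- **Borel's theorem** on exponential sums: in a vanishing linear combination of exponentials of
normalized entire functions, no term with a nonzero coefficient can have an exponent different from
all the others. -/
theorem exists_exponent_eq {ι : Type} [Fintype ι] {a : ι → ℂ → ℂ}
    (ha : ∀ i, Differentiable ℂ (a i)) (ha0 : ∀ i, a i 0 = 0) {A : ι → ℂ}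
    (hsum : ∀ z, ∑ i, A i * Complex.exp (a i z) = 0) {I : ι} (hI : A I ≠ 0) :
    ∃ J, J ≠ I ∧ A J ≠ 0 ∧ a J = a I := by
  classical
  -- after division by `exp (a I)` the relation writes `1` as a combination of the `F J`; this is then
  -- reduced to a linearly independent subfamily with nonzero coefficients
  let B := {J // J ≠ I ∧ A J ≠ 0}
  let F : B → ℂ → ℂ := fun J z => Complex.exp (a J.1 z - a I z)
  have h1 : (fun _ => 1 : ℂ → ℂ) ∈ Submodule.span ℂ (Set.range F) := by
    have : (fun _ => 1 : ℂ → ℂ) = ∑ J ∈ Finset.univ.erase I,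
        (-(A J) / A I) • fun z => Complex.exp (a J z - a I z) := by
      funext z
      have h2 := hsum z
      rw [← Finset.add_sum_erase _ _ (Finset.mem_univ I), add_eq_zero_iff_eq_neg,
        ← Finset.sum_neg_distrib] at h2
      have h3 := Complex.exp_ne_zero (a I z)
      simp only [Finset.sum_apply, Pi.smul_apply, smul_eq_mul, Complex.exp_sub]
      have h4 := div_self (mul_ne_zero hI h3)
      nth_rewrite 1 [h2] at h4
      rw [← h4, Finset.sum_div]
      refine Finset.sum_congr rfl fun J _ => ?_
      field_simp
    rw [this]
    refine Submodule.sum_mem _ fun J hJ => ?_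
    by_cases hJ0 : A J = 0
    · simp [hJ0]
    · exact Submodule.smul_mem _ _
        (Submodule.subset_span ⟨⟨J, Finset.ne_of_mem_erase hJ, hJ0⟩, rfl⟩)
  obtain ⟨κ, s, hs, hspan, hli⟩ := exists_linearIndependent' ℂ F
  rw [← hspan, Finsupp.mem_span_range_iff_exists_finsupp] at h1
  obtain ⟨c, hc⟩ := h1
  let h : c.support → ℂ → ℂ := fun i z => a (s i.1).1 z - a I z
  have hsum' : ∀ z, ∑ i : c.support, c i.1 * Complex.exp (h i z) = 1 := by
    intro z
    have := congrFun hc z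
    rw [Finsupp.sum, Finset.sum_apply] at this
    rw [Finset.sum_coe_sort c.support (fun i => c i * Complex.exp (a (s i).1 z - a I z))]
    exact this
  have hne : c.support.Nonempty := by
    by_contra hcon
    rw [Finset.not_nonempty_iff_eq_empty, Finsupp.support_eq_empty] at hcon
    have := congrFun hc 0
    simp [hcon] at this
  obtain ⟨i, hi⟩ := hne
  have := exponents_eq_zero (h := h) (fun i => (ha _).sub (ha _)) (fun i => by simp [h, ha0])
    (κ := fun i => c i.1) (fun i => Finsupp.mem_support_iff.1 i.2)
    (hli.comp (fun i : c.support => i.1) Subtype.val_injective) hsum' ⟨i, hi⟩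
  exact ⟨(s i).1, (s i).2.1, (s i).2.2, funext fun z => sub_eq_zero.1 (this z)⟩

/-! ### Zero sets of entire functions of several variables -/

/-- The complement of the zero set of an entire function that is not identically zero is dense. -/
theorem dense_ne_zero {m : ℕ} {w : (Fin m → ℂ) → ℂ} (hw : Differentiable ℂ w) {z₁ : Fin m → ℂ}
    (h1 : w z₁ ≠ 0) : Dense {z | w z ≠ 0} := by
  intro z
  by_contra hz
  let L : ℂ → Fin m → ℂ := fun t => z + t • (z₁ - z)
  have hL : Differentiable ℂ L := by fun_prop
  have hφ : Differentiable ℂ (fun t => w (L t)) := hw.comp hL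
  have hev : ∀ᶠ x in nhds z, w x = 0 := by
    filter_upwards [isClosed_closure.isOpen_compl.mem_nhds hz] with x hx
    by_contra h
    exact hx (subset_closure h)
  have hL0 : Filter.Tendsto L (nhds 0) (nhds z) := by
    have := hL.continuous.tendsto 0
    simpa [L] using this
  have heq : (fun t => w (L t)) = fun _ => 0 :=
    AnalyticOnNhd.eq_of_eventuallyEq (z₀ := 0) (fun t _ => hφ.analyticAt t)
      (fun t _ => analyticAt_const) (hL0.eventually hev)
  apply h1
  have := congrFun heq 1
  simpa [L] using this

/-- A finite family of entire functions, none identically zero, has a common non-zero. -/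
theorem exists_forall_ne_zero {m : ℕ} {ι : Type} [Finite ι] {w : ι → (Fin m → ℂ) → ℂ}
    (hw : ∀ i, Differentiable ℂ (w i)) (h1 : ∀ i, ∃ z, w i z ≠ 0) : ∃ z, ∀ i, w i z ≠ 0 := by
  have hd : Dense (⋂ i, {z | w i z ≠ 0}) := dense_iInter_of_isOpen
    (fun i => isOpen_ne_fun (hw i).continuous continuous_const)
    (fun i => by obtain ⟨z, hz⟩ := h1 i; exact dense_ne_zero (hw i) hz)
  obtain ⟨z, hz⟩ := hd.nonempty
  exact ⟨z, fun i => Set.mem_iInter.1 hz i⟩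

/-- A point `z₀` that detects proportionality: two of the functions that have the same ratio at
`z₀` and at the origin are proportional everywhere. -/
theorem exists_detecting_point {m q : ℕ} {u : Fin q → (Fin m → ℂ) → ℂ}
    (hu : ∀ j, Differentiable ℂ (u j)) : ∃ z₀, ∀ i j, u i z₀ * u j 0 = u j z₀ * u i 0 →
      ∀ z, u i z * u j 0 = u j z * u i 0 := by
  let ι := {p : Fin q × Fin q // ∃ z, u p.1 z * u p.2 0 - u p.2 z * u p.1 0 ≠ 0}
  obtain ⟨z₀, hz₀⟩ := exists_forall_ne_zero
    (w := fun (p : ι) z => u p.1.1 z * u p.1.2 0 - u p.1.2 z * u p.1.1 0)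
    (fun p => ((hu _).mul_const _).sub ((hu _).mul_const _)) (fun p => p.2)
  refine ⟨z₀, fun i j hij z => ?_⟩
  by_contra hcon
  exact hz₀ ⟨(i, j), z, sub_ne_zero.2 hcon⟩ (sub_eq_zero.2 hij)

/-! ### Laplace expansion -/

/-- The square matrix whose `j`-th row is `(0, Y j)` for `j ∈ S` and `(X j, 0)` for `j ∉ S`. -/
noncomputable def laplaceBlock {α β : Type} [DecidableEq α] [DecidableEq β] (X : α ⊕ β → α → ℂ)
    (Y : α ⊕ β → β → ℂ) (S : Finset (α ⊕ β)) : Matrix (α ⊕ β) (α ⊕ β) ℂ :=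
  S.piecewise (fun j => Sum.elim 0 (Y j)) (fun j => Sum.elim (X j) 0)

/-- Laplace expansion of a determinant with rows `(X j, u j • Y j)` in powers of `u`. -/
theorem det_eq_sum_laplaceBlock {α β : Type} [Fintype α] [Fintype β] [DecidableEq α]
    [DecidableEq β] (X : α ⊕ β → α → ℂ) (Y : α ⊕ β → β → ℂ) (u : α ⊕ β → ℂ) :
    Matrix.det (Matrix.of fun j => Sum.elim (X j) (u j • Y j)) =
      ∑ S, (laplaceBlock X Y S).det * ∏ j ∈ S, u j := by
  let P : α ⊕ β → α ⊕ β → ℂ := fun j => Sum.elim 0 (Y j)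
  let Q : α ⊕ β → α ⊕ β → ℂ := fun j => Sum.elim (X j) 0
  have h1 : (fun j => Sum.elim (X j) (u j • Y j)) = (fun j => u j • P j) + Q := by
    funext j k
    cases k <;> simp [P, Q]
  have h2 := (Matrix.detRowAlternating (n := α ⊕ β) (R := ℂ)).toMultilinearMap.map_add_univ
    (fun j => u j • P j) Q
  rw [← h1] at h2
  refine h2.trans (Finset.sum_congr rfl fun S _ => ?_)
  have h3 := (Matrix.detRowAlternating (n := α ⊕ β) (R := ℂ)).toMultilinearMap.map_piecewise_smul
    u (S.piecewise P Q) S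
  have h4 : S.piecewise (fun j => u j • S.piecewise P Q j) (S.piecewise P Q) =
      S.piecewise (fun j => u j • P j) Q := by
    funext j
    by_cases hj : j ∈ S <;> simp [hj]
  rw [h4] at h3
  rw [h3, smul_eq_mul, mul_comm]
  rfl

/-- Only the terms of the correct degree survive in the Laplace expansion: doubling the `β`-columns
of the block matrix has the same effect as doubling its rows in `S`. -/
theorem card_eq_of_det_laplaceBlock_ne_zero {α β : Type} [Fintype α] [Fintype β] [DecidableEq α]
    [DecidableEq β] (X : α ⊕ β → α → ℂ) (Y : α ⊕ β → β → ℂ) {S : Finset (α ⊕ β)}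
    (hS : (laplaceBlock X Y S).det ≠ 0) : S.card = Fintype.card β := by
  have h1 : laplaceBlock X Y S * Matrix.diagonal (Sum.elim 1 2) =
      Matrix.diagonal (fun j => if j ∈ S then 2 else 1) * laplaceBlock X Y S := by
    ext j k
    rw [Matrix.mul_diagonal, Matrix.diagonal_mul]
    by_cases hj : j ∈ S <;> cases k <;> simp [laplaceBlock, hj, mul_comm]
  have h2 := congrArg Matrix.det h1
  rw [Matrix.det_mul, Matrix.det_mul, Matrix.det_diagonal, Matrix.det_diagonal, mul_comm] at h2
  have h3 := mul_right_cancel₀ hS h2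
  simp only [Fintype.prod_sum_type, Sum.elim_inl, Sum.elim_inr, Pi.ofNat_apply,
    Finset.prod_const_one, one_mul, Finset.prod_const, Finset.card_univ] at h3
  rw [← Fintype.prod_sum_type (f := fun j => if j ∈ S then (2:ℂ) else 1), Finset.prod_ite_mem,
    Finset.univ_inter, Finset.prod_const] at h3
  exact (Nat.pow_right_injective le_rfl (by exact_mod_cast h3)).symm

theorem det_laplaceBlock_inr_ne_zero {α β : Type} [Fintype α] [Fintype β] [DecidableEq α]
    [DecidableEq β] (X : α ⊕ β → α → ℂ) (Y : α ⊕ β → β → ℂ)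
    (hX : LinearIndependent ℂ fun i => X (Sum.inl i))
    (hY : LinearIndependent ℂ fun i => Y (Sum.inr i)) :
    (laplaceBlock X Y (Finset.univ.map Function.Embedding.inr)).det ≠ 0 := by
  have h1 : laplaceBlock X Y (Finset.univ.map Function.Embedding.inr) =
      Matrix.fromBlocks (Matrix.of fun i => X (Sum.inl i)) 0 0
        (Matrix.of fun i => Y (Sum.inr i)) := by
    ext j k
    cases j <;> cases k <;> simp [laplaceBlock, Finset.piecewise]
  rw [h1, Matrix.det_fromBlocks_zero₂₁]
  refine mul_ne_zero ?_ ?_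
  · exact ((Matrix.isUnit_iff_isUnit_det _).1
      (Matrix.linearIndependent_rows_iff_isUnit.1 hX)).ne_zero
  · exact ((Matrix.isUnit_iff_isUnit_det _).1
      (Matrix.linearIndependent_rows_iff_isUnit.1 hY)).ne_zero

/-! ### The ordering argument -/

/-- Fujimoto's ordering argument. If every injectively indexed choice of `N + 1` and `n + 1` among
the vectors `a j` admits a coincidence between the sum of the first `N + 1` and the sum of another
`N + 1` of them, then `n + 2` of the vectors agree. -/
theorem exists_equal_vectors {V : Type} [AddCommGroup V] [Module ℝ V] {n N q : ℕ}
    (hq : N + 2 * n + 2 ≤ q) (a : Fin q → V)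
    (hP : ∀ e : Fin (n + 1) ⊕ Fin (N + 1) → Fin q, Function.Injective e →
      ∃ J, J ≠ Finset.univ.map Function.Embedding.inr ∧ J.card = N + 1 ∧
        ∑ j ∈ J, a (e j) = ∑ j ∈ Finset.univ.map Function.Embedding.inr, a (e j)) :
    ∃ k : Fin (n + 2) → Fin q, Function.Injective k ∧ ∀ i j, a (k i) = a (k j) := by
  -- a linear functional that separates the values of `a` turns the problem into one about reals
  obtain ⟨φ, hφ⟩ := Module.exists_dual_forall_apply_ne_zero (K := ℝ)
    (fun p : {p : Fin q × Fin q // a p.1 - a p.2 ≠ 0} => a p.1.1 - a p.1.2) (fun p => p.2)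
  have hφ' : ∀ i j, φ (a i) = φ (a j) → a i = a j := by
    intro i j hij
    by_contra hne
    exact hφ ⟨(i, j), sub_ne_zero.2 hne⟩ (by simp [hij])
  let σ := Tuple.sort (fun j => φ (a j))
  let x : Fin q → ℝ := fun i => φ (a (σ i))
  have hx : Monotone x := Tuple.monotone_sort (fun j => φ (a j))
  let e : Fin (n + 1) ⊕ Fin (N + 1) → Fin q := Sum.elim
    (fun k => σ ⟨q - n - 1 + k, by omega⟩) (fun l => σ ⟨l, by omega⟩)
  have he : Function.Injective e := by
    rintro (i | i) (j | j) hij <;> simp only [e, Sum.elim_inl, Sum.elim_inr,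
      EmbeddingLike.apply_eq_iff_eq, Fin.mk.injEq] at hij
    · congr 1; ext; omega
    · omega
    · omega
    · congr 1; ext; omega
  obtain ⟨J, hJ1, hJ2, hJ3⟩ := hP e he
  set I : Finset (Fin (n + 1) ⊕ Fin (N + 1)) := Finset.univ.map Function.Embedding.inr with hI
  have hIc : I.card = N + 1 := by simp [hI]
  let p : Fin q := ⟨N, by omega⟩
  let r : Fin q := ⟨q - n - 1, by omega⟩
  have hpr : p ≤ r := by simp only [p, r, Fin.mk_le_mk]; omega
  have hxeq : x p = x r := by
    by_contra hne
    have hlt : x p < x r := lt_of_le_of_ne (hx hpr) hne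
    let y : Fin (n + 1) ⊕ Fin (N + 1) → ℝ := fun j => φ (a (e j)) - x p
    have hyI : ∀ j ∈ I, y j ≤ 0 := by
      intro j hj
      obtain ⟨l, -, rfl⟩ := Finset.mem_map.1 hj
      exact sub_nonpos.2 (hx (by simp only [p, Fin.mk_le_mk]; omega))
    have hyO : ∀ j ∉ I, 0 < y j := by
      rintro (j | j) hj
      · exact sub_pos.2 (hlt.trans_le (hx (by simp only [r, Fin.mk_le_mk]; omega)))
      · simp [hI] at hj
    have hsum : ∑ j ∈ J, y j = ∑ j ∈ I, y j := by
      have h1 := congrArg φ hJ3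
      rw [map_sum, map_sum] at h1
      simp only [y, Finset.sum_sub_distrib, h1, Finset.sum_const, hJ2, hIc]
    have hne : (J \ I).Nonempty := by
      rw [Finset.sdiff_nonempty]
      intro hsub
      exact hJ1 (Finset.eq_of_subset_of_card_le hsub (by omega))
    have h1 : ∑ j ∈ J ∩ I, y j < ∑ j ∈ J, y j := by
      rw [← Finset.sum_inter_add_sum_sdiff J I y]
      have := Finset.sum_pos (fun j hj => hyO j (Finset.mem_sdiff.1 hj).2) hne
      linarith
    have h2 : ∑ j ∈ I, y j ≤ ∑ j ∈ J ∩ I, y j := by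
      rw [← Finset.sum_inter_add_sum_sdiff I J y, Finset.inter_comm I J]
      have := Finset.sum_nonpos (s := I \ J) fun j hj => hyI j (Finset.mem_sdiff.1 hj).1
      linarith
    linarith
  refine ⟨fun i => σ ⟨N + i, by omega⟩, ?_, ?_⟩
  · intro i j hij
    simp only [EmbeddingLike.apply_eq_iff_eq, Fin.mk.injEq] at hij
    ext; omega
  · have hall : ∀ i : Fin (n + 2), x ⟨N + i, by omega⟩ = x p := by
      intro i
      refine le_antisymm ?_ (hx (by simp only [p, Fin.mk_le_mk]; omega))
      rw [hxeq]
      exact hx (by simp only [r, Fin.mk_le_mk]; omega)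
    intro i j
    exact hφ' _ _ ((hall i).trans (hall j).symm)

/-! ### Proportional ratios and the projective transformation -/

theorem InGenPos.linearIndependent_comp {q d : ℕ} {H : Fin q → Fin (d + 1) → ℂ} (hH : InGenPos H)
    {ι : Type} [Fintype ι] {k : ι → Fin q} (hk : Function.Injective k)
    (hc : Fintype.card ι ≤ d + 1) : LinearIndependent ℂ fun i => H (k i) := by
  classical
  have h := hH (Finset.univ.image k) (Finset.card_image_le.trans (by simpa using hc))
  exact h.comp (fun i => ⟨k i, Finset.mem_image_of_mem k (Finset.mem_univ i)⟩)
    (fun i j hij => hk (congrArg Subtype.val hij))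

/-- Among the `u j`, which are the ratios of the divisor equations, `n + 2` are pairwise
proportional. -/
theorem exists_proportional {m N n q : ℕ} (hq : N + 2 * n + 2 ≤ q)
    {H : Fin q → Fin (n + 1) → ℂ} {H' : Fin q → Fin (N + 1) → ℂ}
    (hgenH : InGenPos H) (hgenH' : InGenPos H')
    {f : Fin (n + 1) → (Fin m → ℂ) → ℂ} {g : Fin (N + 1) → (Fin m → ℂ) → ℂ}
    (hg : ∀ k, Differentiable ℂ (g k)) {l₀ : Fin (N + 1)} (hl₀ : ∃ z, g l₀ z ≠ 0)
    {u : Fin q → (Fin m → ℂ) → ℂ} (hu : ∀ j, Differentiable ℂ (u j)) (hu0 : ∀ j z, u j z ≠ 0)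
    (hfg : ∀ j z, (∑ k, H j k * f k z) = u j z * ∑ k, H' j k * g k z) :
    ∃ k : Fin (n + 2) → Fin q, Function.Injective k ∧
      ∀ i j z, u (k i) z * u (k j) 0 = u (k j) z * u (k i) 0 := by
  obtain ⟨z₀, hz₀⟩ := exists_detecting_point hu
  have hL : Differentiable ℂ fun t : ℂ => t • z₀ := by fun_prop
  choose a had ha0 hau using fun j =>
    exists_entire_log (f := fun t => u j (t • z₀)) ((hu j).comp hL) (fun t => hu0 j _)
  simp only [zero_smul] at hau
  obtain ⟨k, hk, hkeq⟩ := exists_equal_vectors hq a (by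
    intro e he
    have hdet : ∀ z, Matrix.det (Matrix.of fun j =>
        Sum.elim (H (e j)) (u (e j) z • H' (e j)) :
          Matrix (Fin (n + 1) ⊕ Fin (N + 1)) (Fin (n + 1) ⊕ Fin (N + 1)) ℂ) = 0 := by
      obtain ⟨z₁, hz₁⟩ := hl₀
      have hcont : Continuous fun z => Matrix.det (Matrix.of fun j =>
          Sum.elim (H (e j)) (u (e j) z • H' (e j)) :
            Matrix (Fin (n + 1) ⊕ Fin (N + 1)) (Fin (n + 1) ⊕ Fin (N + 1)) ℂ) := by
        apply Continuous.matrix_det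
        refine continuous_matrix fun i j => ?_
        have := (hu (e i)).continuous
        cases j
        · exact continuous_const
        · exact this.mul continuous_const
      refine congrFun (Continuous.ext_on (dense_ne_zero (hg l₀) hz₁) hcont continuous_const ?_)
      intro z hz
      -- where `g` does not vanish, `(f, -g)` is a nonzero vector of the kernel
      refine Matrix.exists_mulVec_eq_zero_iff.1
        ⟨Sum.elim (fun k => f k z) (fun k => -g k z), fun h => hz ?_, ?_⟩
      · simpa using congrFun h (Sum.inr l₀)
      · funext j
        have := hfg (e j) z
        simp only [Matrix.mulVec, dotProduct, Fintype.sum_sum_type, Matrix.of_apply, Sum.elim_inl,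
          Sum.elim_inr, Pi.smul_apply, smul_eq_mul, Pi.zero_apply, this, Finset.mul_sum,
          ← Finset.sum_add_distrib]
        exact Finset.sum_eq_zero fun k _ => by ring
    let X : Fin (n + 1) ⊕ Fin (N + 1) → Fin (n + 1) → ℂ := fun j => H (e j)
    let Y : Fin (n + 1) ⊕ Fin (N + 1) → Fin (N + 1) → ℂ := fun j => H' (e j)
    have hsum : ∀ t : ℂ, ∑ S, ((laplaceBlock X Y S).det * ∏ j ∈ S, u (e j) 0) *
        Complex.exp ((∑ j ∈ S, a (e j)) t) = 0 := by
      intro t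
      have h1 := det_eq_sum_laplaceBlock X Y (fun j => u (e j) (t • z₀))
      rw [hdet] at h1
      rw [h1]
      refine Finset.sum_congr rfl fun S _ => ?_
      rw [Finset.sum_apply, Complex.exp_sum, mul_assoc, ← Finset.prod_mul_distrib]
      congr 1
      exact Finset.prod_congr rfl fun j _ => (hau (e j) t).symm
    obtain ⟨J, hJ, hJ0, hJa⟩ := exists_exponent_eq
      (a := fun S : Finset (Fin (n + 1) ⊕ Fin (N + 1)) => ∑ j ∈ S, a (e j))
      (fun S => Differentiable.sum fun j _ => had (e j))
      (fun S => by simp [ha0]) hsum (I := Finset.univ.map Function.Embedding.inr)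
      (mul_ne_zero (det_laplaceBlock_inr_ne_zero X Y
        (hgenH.linearIndependent_comp (he.comp Sum.inl_injective) (by simp))
        (hgenH'.linearIndependent_comp (he.comp Sum.inr_injective) (by simp)))
        (Finset.prod_ne_zero_iff.2 fun j _ => hu0 _ _))
    refine ⟨J, hJ, ?_, hJa⟩
    simpa using card_eq_of_det_laplaceBlock_ne_zero X Y (left_ne_zero_of_mul hJ0))
  refine ⟨k, hk, fun i j => hz₀ _ _ ?_⟩
  have h1 := hau (k i) 1
  have h2 := hau (k j) 1
  simp only [one_smul] at h1 h2
  rw [h1, h2, hkeq i j]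
  ring

/-- Extension of Fujimoto's `3n+2` uniqueness theorem.  Meromorphic maps
`f : ℂ^m → ℙ^n` and `g : ℂ^m → ℙ^N` are given by reduced representations, i.e. tuples
of entire functions.  The divisor condition `f^*(H_j) = g^*(H'_j)` is expressed by the
quotient `(f,H_j)/(g,H'_j)` being a nowhere-zero entire function, the condition
`f = L(g)` by proportionality (via a nowhere-zero entire factor) of the reduced
representation of `f` with `M·g` for the matrix `M` inducing `L`, and `L(H') = H`
by `H ᵀM` being proportional to `H'`. -/
theorem stmt12 {m N n q : ℕ} (hn : 1 ≤ n) (hNn : n ≤ N) (hq : N + 2 * n + 2 ≤ q)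
    (H : Fin q → Fin (n + 1) → ℂ) (H' : Fin q → Fin (N + 1) → ℂ)
    (hgenH : InGenPos H) (hgenH' : InGenPos H')
    (f : Fin (n + 1) → (Fin m → ℂ) → ℂ) (g : Fin (N + 1) → (Fin m → ℂ) → ℂ)
    (hf : ∀ k, Differentiable ℂ (f k)) (hg : ∀ k, Differentiable ℂ (g k))
    -- `f(ℂ^m) ⊄ H_j` and `g(ℂ^m) ⊄ H'_j`
    (hfH : ∀ j : Fin q, ¬∀ z, (∑ k, H j k * f k z) = 0)
    (hgH' : ∀ j : Fin q, ¬∀ z, (∑ k, H' j k * g k z) = 0)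
    -- `g` is linearly non-degenerate
    (hgnd : ∀ v : Fin (N + 1) → ℂ, (∀ z, (∑ k, v k * g k z) = 0) → v = 0)
    -- `f^*(H_j) = g^*(H'_j)` for all `j`
    (hshare : ∀ j : Fin q, ∃ u : (Fin m → ℂ) → ℂ, Differentiable ℂ u ∧ (∀ z, u z ≠ 0) ∧
      ∀ z, (∑ k, H j k * f k z) = u z * ∑ k, H' j k * g k z) :
    N = n ∧
      ∃ M : Matrix (Fin (n + 1)) (Fin (N + 1)) ℂ,
        LinearIndependent ℂ (fun i => M i) ∧
        (∃ c : (Fin m → ℂ) → ℂ, Differentiable ℂ c ∧ (∀ z, c z ≠ 0) ∧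
          ∀ z k, f k z = c z * ∑ l, M k l * g l z) ∧
        ∃ k : Fin (n + 2) → Fin q, Function.Injective k ∧
          ∀ i, ∃ d : ℂ, d ≠ 0 ∧ Matrix.vecMul (H (k i)) M = d • H' (k i) := by
  choose u hu hu0 hfg using hshare
  have hl₀ : ∃ l, ∃ z, g l z ≠ 0 := by
    by_contra! hcon
    exact hgH' ⟨0, by omega⟩ fun z => by simp [hcon]
  obtain ⟨l₀, hl₀⟩ := hl₀
  obtain ⟨k, hk, hprop⟩ := exists_proportional hq hgenH hgenH' hg hl₀ hu hu0 hfg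
  let c : (Fin m → ℂ) → ℂ := u (k 0)
  let d : Fin (n + 2) → ℂ := fun i => u (k i) 0 / u (k 0) 0
  have hd : ∀ i, d i ≠ 0 := fun i => div_ne_zero (hu0 _ _) (hu0 _ _)
  have hud : ∀ i z, u (k i) z = c z * d i := by
    intro i z
    simp only [c, d]
    rw [← mul_div_assoc, eq_div_iff (hu0 _ _)]
    exact hprop i 0 z
  -- the matrix `M` is determined by the first `n + 1` of the selected hyperplanes
  let P : Matrix (Fin (n + 1)) (Fin (n + 1)) ℂ := Matrix.of fun i => H (k i.castSucc)
  let Q : Matrix (Fin (n + 1)) (Fin (N + 1)) ℂ :=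
    Matrix.of fun i => d i.castSucc • H' (k i.castSucc)
  have hkc : Function.Injective fun i : Fin (n + 1) => k i.castSucc :=
    hk.comp (Fin.castSucc_injective _)
  have hP : IsUnit P := Matrix.linearIndependent_rows_iff_isUnit.1
    (hgenH.linearIndependent_comp hkc (by simp))
  have hPdet : IsUnit P.det := (Matrix.isUnit_iff_isUnit_det _).1 hP
  have hQ : LinearIndependent ℂ fun i => Q i := by
    have := (hgenH'.linearIndependent_comp hkc (by simp; omega)).units_smul
      (fun i => Units.mk0 (d i.castSucc) (hd _))
    exact this
  let M : Matrix (Fin (n + 1)) (Fin (N + 1)) ℂ := P⁻¹ * Q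
  have hfM : ∀ z k, f k z = c z * ∑ l, M k l * g l z := by
    intro z
    have h1 : P.mulVec (fun k => f k z) = c z • Q.mulVec (fun l => g l z) := by
      funext i
      have := hfg (k i.castSucc) z
      rw [hud] at this
      simp only [Matrix.mulVec, dotProduct, P, Q, Matrix.of_apply, Pi.smul_apply, smul_eq_mul,
        this, mul_assoc, Finset.mul_sum]
    have h2 : P⁻¹.mulVec (P.mulVec (fun k => f k z)) = fun k => f k z := by
      rw [Matrix.mulVec_mulVec, Matrix.nonsing_inv_mul _ hPdet, Matrix.one_mulVec]
    rw [h1, Matrix.mulVec_smul, Matrix.mulVec_mulVec] at h2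
    intro k
    exact (congrFun h2 k).symm
  have hM : LinearIndependent ℂ fun i => M i := by
    refine Matrix.vecMul_injective_iff.1 ?_
    have h1 := Matrix.vecMul_injective_iff.2 hQ
    have h2 : Function.Injective fun v => Matrix.vecMul v P⁻¹ :=
      Matrix.vecMul_injective_of_isUnit ((Matrix.isUnit_nonsing_inv_iff).2 hP)
    intro v w hvw
    simp only [← Matrix.vecMul_vecMul] at hvw
    exact h2 (h1 hvw)
  have hHM : ∀ i, Matrix.vecMul (H (k i)) M = d i • H' (k i) := by
    intro i
    rw [← sub_eq_zero]
    apply hgnd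
    intro z
    have h1 : Matrix.vecMul (H (k i)) M ⬝ᵥ (fun l => g l z) =
        H (k i) ⬝ᵥ M.mulVec (fun l => g l z) := (Matrix.dotProduct_mulVec _ _ _).symm
    have h2 : c z * (H (k i) ⬝ᵥ M.mulVec (fun l => g l z)) =
        c z * ∑ l, d i * H' (k i) l * g l z := by
      have h3 := hfg (k i) z
      rw [hud] at h3
      simp only [hfM z] at h3
      rw [dotProduct, Finset.mul_sum]
      simp only [Matrix.mulVec, dotProduct]
      simp only [mul_assoc, ← Finset.mul_sum]
      rw [mul_assoc] at h3
      rw [← h3, Finset.mul_sum]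
      exact Finset.sum_congr rfl fun j _ => by ring
    have h4 := mul_left_cancel₀ (hu0 (k 0) z) h2
    rw [← h1] at h4
    simp only [Pi.sub_apply, sub_mul, Finset.sum_sub_distrib, Pi.smul_apply, smul_eq_mul]
    exact sub_eq_zero.2 h4
  refine ⟨?_, M, hM, ⟨c, hu _, hu0 _, hfM⟩, k, hk, fun i => ⟨d i, hd i, hHM i⟩⟩
  -- if `n < N`, then the `n + 2` vectors `d i • H' (k i)` are independent, but they are the images
  -- of the dependent vectors `H (k i)` under a linear map
  by_contra hne
  have hlt : n < N := lt_of_le_of_ne hNn (Ne.symm hne)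
  have h1 : LinearIndependent ℂ fun i => M.vecMulLinear (H (k i)) := by
    have := (hgenH'.linearIndependent_comp hk (by simp; omega)).units_smul
      (fun i => Units.mk0 (d i) (hd _))
    convert this using 2 with i
    exact hHM i
  have h2 := (LinearIndependent.of_comp M.vecMulLinear h1).fintype_card_le_finrank
  simp at h2
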